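/- Let X be a metric space of finite capacity dimension (i.e. there is an integer N ≥ 0 such that the capacity dimension of X is at most N). Then for every integer n ≥ 0 the following are equivalent: (a) S^n is a small scale Lipschitz extensor of X; (b) the capacity dimension of X is at most n. -/

import Mathlib

/-- A metric space `E` is a large scale Lipschitz extensor of `X`: there are `C, M > 0` such
that every `λ`-Lipschitz map on a nonempty subset of `X` with `0 < λ < M` extends to a
`(C·λ)`-Lipschitz map on `X`. -/
def LargeScaleLipschitzExtensorOf (X E : Type*) [MetricSpace X] [MetricSpace E] : Prop :=
  ∃ C : ℝ, 0 < C ∧ ∃ M : ℝ, 0 < M ∧ ∀ A : Set X, A.Nonempty →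
    ∀ lam : ℝ, 0 < lam → lam < M →
      ∀ f : A → E, (∀ a b : A, dist (f a) (f b) ≤ lam * dist (a : X) (b : X)) →
        ∃ g : X → E, (∀ a : A, g a = f a) ∧
          ∀ x y : X, dist (g x) (g y) ≤ C * lam * dist x y

/-- A metric space `E` is a small scale Lipschitz extensor of `X`: there are `C, M > 0` such
that every `λ`-Lipschitz map on a nonempty subset of `X` with `λ > M` extends to a
`(C·λ)`-Lipschitz map on `X`. -/
def SmallScaleLipschitzExtensorOf (X E : Type*) [MetricSpace X] [MetricSpace E] : Prop :=
  ∃ C : ℝ, 0 < C ∧ ∃ M : ℝ, 0 < M ∧ ∀ A : Set X, A.Nonempty →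
    ∀ lam : ℝ, M < lam →
      ∀ f : A → E, (∀ a b : A, dist (f a) (f b) ≤ lam * dist (a : X) (b : X)) →
        ∃ g : X → E, (∀ a : A, g a = f a) ∧
          ∀ x y : X, dist (g x) (g y) ≤ C * lam * dist x y
/-- The capacity dimension of `X` is at most `n`: there exist `C > 0` and `r₀ > 0` such that
for every `0 < r < r₀` there is a cover of `X` splitting into `n+1` `r`-disjoint families with
all members of diameter at most `C·r`. -/
def CapacityDimLE (X : Type*) [MetricSpace X] (n : ℕ) : Prop :=
  ∃ C : ℝ, 0 < C ∧ ∃ r₀ : ℝ, 0 < r₀ ∧ ∀ r : ℝ, 0 < r → r < r₀ →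
    ∃ U : Fin (n + 1) → Set (Set X),
      (∀ x : X, ∃ i, ∃ V ∈ U i, x ∈ V) ∧
      (∀ i, ∀ V ∈ U i, ∀ W ∈ U i, V ≠ W → ∀ x ∈ V, ∀ y ∈ W, r < dist x y) ∧
      (∀ i, ∀ V ∈ U i, ∀ x ∈ V, ∀ y ∈ V, dist x y ≤ C * r)


/-- Coordinate form of the extension property for maps to `S^n`. -/
def AvoidZero (X : Type*) [MetricSpace X] (n : ℕ) : Prop :=
  ∃ C : ℝ, 0 < C ∧ ∃ c : ℝ, 0 < c ∧ ∃ M : ℝ, 0 < M ∧ ∀ L : ℝ, M < L →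
    ∀ F : Fin (n + 1) → X → ℝ, (∀ i x y, |F i x - F i y| ≤ L * dist x y) →
      ∃ H : Fin (n + 1) → X → ℝ, (∀ i x y, |H i x - H i y| ≤ C * L * dist x y) ∧
        (∀ x, ∃ i, c ≤ |H i x|) ∧ (∀ i x, |H i x - F i x| ≤ C) ∧
        (∀ x, (∃ i, 1 ≤ |F i x|) → ∀ i, H i x = F i x)

theorem max_left_lip (a b c : ℝ) : |max a b - max a c| ≤ |b - c| := by
  grind

theorem exists_bump {X : Type*} [MetricSpace X] (S : Set X) (ρ : ℝ) (hρ : 0 < ρ) :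
    ∃ φ : X → ℝ, (∀ x, 0 ≤ φ x) ∧ (∀ x, φ x ≤ 1) ∧ (∀ x ∈ S, φ x = 1) ∧
      (∀ x, 0 < φ x → ∃ s ∈ S, dist x s < ρ) ∧
      (∀ x y, |φ x - φ y| ≤ 1 / ρ * dist x y) := by
  rcases S.eq_empty_or_nonempty with rfl | hS
  · refine ⟨fun _ => 0, by simp, by simp, by simp, by simp, ?_⟩
    intro x y
    simp only [sub_self, abs_zero]
    positivity
  · refine ⟨fun x => max 0 (1 - Metric.infDist x S / ρ), fun x => le_max_left _ _, ?_, ?_, ?_, ?_⟩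
    · intro x
      have : 0 ≤ Metric.infDist x S / ρ := div_nonneg Metric.infDist_nonneg hρ.le
      exact max_le (by norm_num) (by linarith)
    · intro x hx
      simp [Metric.infDist_zero_of_mem hx]
    · intro x hx
      have h1 : Metric.infDist x S / ρ < 1 := by
        rcases lt_max_iff.1 hx with h | h
        · exact absurd h (lt_irrefl _)
        · linarith
      rw [div_lt_one hρ] at h1
      exact (Metric.infDist_lt_iff hS).1 h1
    · intro x y
      have h1 : |Metric.infDist x S - Metric.infDist y S| ≤ dist x y := by
        have := (Metric.lipschitz_infDist_pt S).dist_le_mul x y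
        simpa [Real.dist_eq] using this
      calc |max 0 (1 - Metric.infDist x S / ρ) - max 0 (1 - Metric.infDist y S / ρ)|
          ≤ |(1 - Metric.infDist x S / ρ) - (1 - Metric.infDist y S / ρ)| :=
            max_left_lip _ _ _
        _ = 1 / ρ * |Metric.infDist x S - Metric.infDist y S| := by
            rw [show (1 - Metric.infDist x S / ρ) - (1 - Metric.infDist y S / ρ)
              = -(1 / ρ * (Metric.infDist x S - Metric.infDist y S)) by ring, abs_neg, abs_mul,
              abs_of_pos (by positivity : 0 < 1 / ρ)]
        _ ≤ _ := by gcongr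

/-- Cut-off function. -/
def cutoff (t : ℝ) : ℝ := max 0 (min 1 (2 - 2 * t))

theorem cutoff_nonneg (t : ℝ) : 0 ≤ cutoff t := le_max_left _ _
theorem cutoff_le_one (t : ℝ) : cutoff t ≤ 1 := max_le (by norm_num) (min_le_left _ _)
theorem cutoff_one {t : ℝ} (h : t ≤ 1 / 2) : cutoff t = 1 := by
  unfold cutoff
  rw [min_eq_left (by linarith), max_eq_right (by norm_num)]
theorem cutoff_zero {t : ℝ} (h : 1 ≤ t) : cutoff t = 0 := by
  unfold cutoff
  exact max_eq_left ((min_le_right _ _).trans (by linarith))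
theorem cutoff_lip (s t : ℝ) : |cutoff s - cutoff t| ≤ 2 * |s - t| := by
  unfold cutoff
  grind

theorem mul_lip {a b a' b' A B P Q d : ℝ} (ha : |a| ≤ A) (hb : |b'| ≤ B)
    (h1 : |a - a'| ≤ P * d) (h2 : |b - b'| ≤ Q * d) :
    |a * b - a' * b'| ≤ (A * Q + B * P) * d := by
  have hA : 0 ≤ A := (abs_nonneg _).trans ha
  have hB : 0 ≤ B := (abs_nonneg _).trans hb
  calc |a * b - a' * b'| = |a * (b - b') + b' * (a - a')| := by congr 1; ring
    _ ≤ |a * (b - b')| + |b' * (a - a')| := abs_add_le _ _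
    _ = |a| * |b - b'| + |b'| * |a - a'| := by rw [abs_mul, abs_mul]
    _ ≤ A * (Q * d) + B * (P * d) := by gcongr
    _ = _ := by ring

theorem avoidZero_succ {X : Type*} [MetricSpace X] (n : ℕ) (h : AvoidZero X n) :
    AvoidZero X (n + 1) := by
  obtain ⟨C, hC, c, hc, M, hM, h⟩ := h
  refine ⟨3 * C + 3, by positivity, min c (1 / 2), by positivity, M, hM, ?_⟩
  intro L hL F hF
  have hL0 : 0 < L := hM.trans hL
  obtain ⟨H, hH1, hH2, hH3, hH4⟩ := h L hL (fun i => F i.castSucc) (fun i => hF i.castSucc)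
  let t : X → ℝ := fun x => F (Fin.last _) x
  have hχ : ∀ x y, |cutoff (|t x|) - cutoff (|t y|)| ≤ (2 * L) * dist x y := by
    intro x y
    have h1 := cutoff_lip (|t x|) (|t y|)
    have h2 := abs_abs_sub_abs_le (t x) (t y)
    have h3 := hF (Fin.last _) x y
    have h4 : |t x - t y| ≤ L * dist x y := h3
    linarith
  let G : Fin (n + 1) → X → ℝ :=
    fun i x => F i.castSucc x + cutoff (|t x|) * (H i x - F i.castSucc x)
  refine ⟨fun i x => Fin.lastCases (motive := fun _ => ℝ) (t x) (fun j => G j x) i, ?_, ?_, ?_, ?_⟩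
  · intro i x y
    have hLd : 0 ≤ L * dist x y := by positivity
    have hCLd : 0 ≤ C * (L * dist x y) := by positivity
    induction i using Fin.lastCases with
    | last =>
      simp only [Fin.lastCases_last]
      have h4 : |t x - t y| ≤ L * dist x y := hF (Fin.last _) x y
      nlinarith
    | cast j =>
      simp only [Fin.lastCases_castSucc]
      have h1 : |(H j x - F j.castSucc x) - (H j y - F j.castSucc y)|
          ≤ (C * L + L) * dist x y := by
        have e1 := hH1 j x y
        have e2 := hF j.castSucc x y
        rw [abs_le] at *
        constructor <;> nlinarith
      have h2 := mul_lip (A := 1) (by rw [abs_of_nonneg (cutoff_nonneg _)]; exact cutoff_le_one (|t x|))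
        (hH3 j y) (hχ x y) h1
      have e2 := hF j.castSucc x y
      have : |G j x - G j y| ≤ |F j.castSucc x - F j.castSucc y| +
        |cutoff (|t x|) * (H j x - F j.castSucc x) - cutoff (|t y|) * (H j y - F j.castSucc y)| := by
        refine le_trans (le_of_eq ?_) (abs_add_le _ _)
        simp only [G]
        congr 1
        ring
      nlinarith
  · intro x
    by_cases hx : |t x| ≤ 1 / 2
    · obtain ⟨i, hi⟩ := hH2 x
      refine ⟨i.castSucc, ?_⟩
      simp only [Fin.lastCases_castSucc, G]
      rw [cutoff_one hx]
      refine (min_le_left _ _).trans (hi.trans (le_of_eq ?_))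
      congr 1
      ring
    · refine ⟨Fin.last _, ?_⟩
      simp only [Fin.lastCases_last]
      exact (min_le_right _ _).trans (not_le.1 hx).le
  · intro i x
    induction i using Fin.lastCases with
    | last => simp [t]; positivity
    | cast j =>
      simp only [Fin.lastCases_castSucc, G, add_sub_cancel_left, abs_mul]
      rw [abs_of_nonneg (cutoff_nonneg _)]
      have := hH3 j x
      have h0 := cutoff_nonneg (|t x|)
      have h1 := cutoff_le_one (|t x|)
      have h2 := abs_nonneg (H j x - F j.castSucc x)
      nlinarith
  · rintro x ⟨i, hi⟩ k
    induction k using Fin.lastCases with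
    | last => simp [t]
    | cast j =>
      simp only [Fin.lastCases_castSucc, G]
      induction i using Fin.lastCases with
      | last => rw [cutoff_zero hi]; ring
      | cast i => rw [hH4 x ⟨i, hi⟩ j]; ring

theorem avoidZero_of_capacityDim {X : Type*} [MetricSpace X] (n : ℕ) (h : CapacityDimLE X n) :
    AvoidZero X n := by
  obtain ⟨C, hC, r₀, hr₀, h⟩ := h
  refine ⟨4 * C + 2, by positivity, 1 / 8, by norm_num, 1 / (8 * C * r₀), by positivity, ?_⟩
  intro L hL F hF
  have hL0 : 0 < L := lt_trans (by positivity) hL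
  obtain ⟨r, hr⟩ : ∃ r, r = 1 / (8 * C * L) := ⟨_, rfl⟩
  have hr0 : 0 < r := by rw [hr]; positivity
  have hCLr : L * (C * r) = 1 / 8 := by rw [hr]; field_simp
  have hrr : r < r₀ := by
    rw [div_lt_iff₀ (by positivity)] at hL
    rw [hr, div_lt_iff₀ (by positivity)]
    linarith
  have hinv : 1 / r = 8 * C * L := by rw [hr]; field_simp
  obtain ⟨U, hU1, hU2, hU3⟩ := h r hr0 hrr
  have hp := fun i => exists_bump {x | ∃ V ∈ U i, x ∈ V ∧ ∃ y ∈ V, 0 ≤ F i y} r hr0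
  have hm := fun i => exists_bump {x | ∃ V ∈ U i, x ∈ V ∧ ∀ y ∈ V, F i y < 0} r hr0
  choose φ p0 p1 p2 p3 p4 using hp
  choose ψ m0 m1 m2 m3 m4 using hm
  let nm : X → ℝ := fun x => ‖fun i => F i x‖
  have hnm : ∀ x y, |nm x - nm y| ≤ L * dist x y := by
    intro x y
    refine (abs_norm_sub_norm_le _ _).trans ?_
    rw [pi_norm_le_iff_of_nonneg (by positivity)]
    intro i
    exact hF i x y
  have hχ : ∀ x y, |cutoff (nm x) - cutoff (nm y)| ≤ (2 * L) * dist x y := by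
    intro x y
    have h1 := cutoff_lip (nm x) (nm y)
    have h2 := hnm x y
    linarith
  let σ : Fin (n + 1) → X → ℝ := fun i x => 1 / 4 * (φ i x - ψ i x)
  have hσ1 : ∀ i x, |σ i x| ≤ 1 / 4 := by
    intro i x
    have := p0 i x; have := p1 i x; have := m0 i x; have := m1 i x
    simp only [σ]
    rw [abs_le]
    constructor <;> linarith
  have hσ2 : ∀ i x y, |σ i x - σ i y| ≤ (4 * C * L) * dist x y := by
    intro i x y
    have e1 := p4 i x y
    have e2 := m4 i x y
    rw [hinv] at e1 e2
    simp only [σ]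
    rw [abs_le] at *
    constructor <;> linarith
  have hprod : ∀ i x, |cutoff (nm x) * σ i x| ≤ 1 / 4 := by
    intro i x
    rw [abs_mul, abs_of_nonneg (cutoff_nonneg _)]
    have h0 := cutoff_nonneg (nm x)
    have h1 := cutoff_le_one (nm x)
    have h2 := abs_nonneg (σ i x)
    have h3 := hσ1 i x
    nlinarith
  refine ⟨fun i x => F i x + cutoff (nm x) * σ i x, ?_, ?_, ?_, ?_⟩
  · intro i x y
    have h2 := mul_lip (A := 1)
      (by rw [abs_of_nonneg (cutoff_nonneg _)]; exact cutoff_le_one (nm x))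
      (hσ1 i y) (hχ x y) (hσ2 i x y)
    have e2 := hF i x y
    have hLd : 0 ≤ L * dist x y := by positivity
    have : |F i x + cutoff (nm x) * σ i x - (F i y + cutoff (nm y) * σ i y)|
        ≤ |F i x - F i y| + |cutoff (nm x) * σ i x - cutoff (nm y) * σ i y| := by
      refine le_trans (le_of_eq ?_) (abs_add_le _ _)
      congr 1
      ring
    nlinarith
  · intro x
    by_cases hx : nm x ≤ 1 / 2
    · obtain ⟨i, V, hV, hxV⟩ := hU1 x
      refine ⟨i, ?_⟩
      simp only [cutoff_one hx, one_mul, σ]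
      by_cases hy : ∃ y ∈ V, 0 ≤ F i y
      · obtain ⟨y, hyV, hy0⟩ := hy
        have e1 : φ i x = 1 := p2 i x ⟨V, hV, hxV, y, hyV, hy0⟩
        have e2 : ψ i x = 0 := by
          by_contra hne
          obtain ⟨s, ⟨W, hW, hsW, hneg⟩, hs⟩ := m3 i x (lt_of_le_of_ne (m0 i x) (Ne.symm hne))
          have hVW : V ≠ W := by
            rintro rfl
            exact absurd (hneg y hyV) (not_lt.2 hy0)
          exact absurd (hU2 i V hV W hW hVW x hxV s hsW) (not_lt.2 hs.le)
        have e3 := hF i y x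
        have e4 : L * dist y x ≤ 1 / 8 := by
          rw [← hCLr]
          have := hU3 i V hV y hyV x hxV
          gcongr
        rw [abs_le] at e3
        rw [e1, e2]
        refine le_trans ?_ (le_abs_self _)
        linarith
      · push Not at hy
        have e1 : ψ i x = 1 := m2 i x ⟨V, hV, hxV, hy⟩
        have e2 : φ i x = 0 := by
          by_contra hne
          obtain ⟨s, ⟨W, hW, hsW, y, hyW, hy0⟩, hs⟩ :=
            p3 i x (lt_of_le_of_ne (p0 i x) (Ne.symm hne))
          have hVW : V ≠ W := by
            rintro rfl
            exact absurd (hy y hyW) (not_lt.2 hy0)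
          exact absurd (hU2 i V hV W hW hVW x hxV s hsW) (not_lt.2 hs.le)
        rw [e1, e2]
        refine le_trans ?_ (neg_le_abs _)
        have := hy x hxV
        linarith
    · have : ∃ i, 1 / 2 < |F i x| := by
        by_contra hcon
        push Not at hcon
        apply hx
        exact (pi_norm_le_iff_of_nonneg (by norm_num)).2 hcon
      obtain ⟨i, hi⟩ := this
      refine ⟨i, ?_⟩
      have h1 := hprod i x
      have h2 := abs_sub_abs_le_abs_sub (F i x) (-(cutoff (nm x) * σ i x))
      rw [abs_neg, sub_neg_eq_add] at h2
      linarith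
  · intro i x
    simp only [add_sub_cancel_left]
    have := hprod i x
    linarith
  · rintro x ⟨i, hi⟩ j
    have : 1 ≤ nm x := hi.trans (norm_le_pi_norm (fun i => F i x) i)
    simp [cutoff_zero this]

theorem gap_lemma (m : ℕ) (v : Fin (m + 2) → ℝ) (c : ℝ) (hc : 0 < c) (a b : Fin (m + 2))
    (h : c ≤ v a - v b) :
    ∃ S : Finset (Fin (m + 2)), a ∈ S ∧ b ∉ S ∧ ∀ i ∈ S, ∀ j ∉ S, c / (m + 1) ≤ v i - v j := by
  obtain ⟨δ, hδ⟩ : ∃ δ, δ = c / ((m : ℝ) + 1) := ⟨_, rfl⟩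
  rw [← hδ]
  have hδ0 : 0 < δ := by rw [hδ]; positivity
  have hcδ : c = δ * (m + 1) := by rw [hδ]; field_simp
  by_contra hcon
  push Not at hcon
  have key : ∀ k : Fin (m + 1), ∃ i, v b + k * δ < v i ∧ v i < v b + (k + 1) * δ := by
    intro k
    have hk : (k : ℝ) ≤ m := by exact_mod_cast Nat.lt_succ_iff.1 k.2
    have hk0 : (0 : ℝ) ≤ k := by positivity
    obtain ⟨i, hi, j, hj, hij⟩ := hcon (Finset.univ.filter fun i => v b + (k + 1) * δ ≤ v i)
      (by simp; nlinarith) (by simp; nlinarith)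
    simp at hi hj
    exact ⟨j, by linarith, hj⟩
  choose f hf1 hf2 using key
  have hinj : Function.Injective f := by
    intro k l hkl
    have h1 := hf1 k; have h2 := hf2 k; have h3 := hf1 l; have h4 := hf2 l
    rw [← hkl] at h3 h4
    have h5 : (k : ℝ) < l + 1 := by nlinarith
    have h6 : (l : ℝ) < k + 1 := by nlinarith
    have h5' : (k : ℕ) < l + 1 := by exact_mod_cast h5
    have h6' : (l : ℕ) < k + 1 := by exact_mod_cast h6
    apply Fin.ext
    omega
  have hab : a ≠ b := by
    rintro rfl
    linarith
  have hsub : Finset.univ.image f ⊆ (Finset.univ.erase a).erase b := by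
    intro i hi
    obtain ⟨k, -, rfl⟩ := Finset.mem_image.1 hi
    have hk : (k : ℝ) ≤ m := by exact_mod_cast Nat.lt_succ_iff.1 k.2
    have hk0 : (0 : ℝ) ≤ k := by positivity
    have h1 := hf1 k; have h2 := hf2 k
    refine Finset.mem_erase.2 ⟨?_, Finset.mem_erase.2 ⟨?_, Finset.mem_univ _⟩⟩
    · intro e
      rw [e] at h1
      nlinarith
    · intro e
      rw [e] at h2
      nlinarith
  have hcard := Finset.card_le_card hsub
  rw [Finset.card_image_of_injective _ hinj, Finset.card_erase_of_mem (by simp [hab.symm]),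
    Finset.card_erase_of_mem (by simp)] at hcard
  simp at hcard

theorem capacityDim_step {X : Type*} [MetricSpace X] (m : ℕ) (hP : AvoidZero X m)
    (hD : CapacityDimLE X (m + 1)) : CapacityDimLE X m := by
  obtain ⟨C₁, hC₁, c, hc, M, hM, hP⟩ := hP
  obtain ⟨C₀, hC₀, r₀, hr₀, hD⟩ := hD
  obtain ⟨δ, hδ⟩ : ∃ δ, δ = c / ((m : ℝ) + 1) := ⟨_, rfl⟩
  have hδ0 : 0 < δ := by rw [hδ]; positivity
  obtain ⟨K, hK⟩ : ∃ K, K = C₁ * 12 := ⟨_, rfl⟩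
  have hK0 : 0 < K := by rw [hK]; positivity
  obtain ⟨κ, hκ⟩ : ∃ κ, κ = min (1 / 4) (δ / (2 * K)) := ⟨_, rfl⟩
  have hκ0 : 0 < κ := by rw [hκ]; positivity
  have hκ1 : κ ≤ 1 / 4 := by rw [hκ]; exact min_le_left _ _
  have hκ2 : κ * (2 * K) ≤ δ := by
    rw [← le_div_iff₀ (by positivity), hκ]; exact min_le_right _ _
  refine ⟨(C₀ + 1) / κ, by positivity, κ * min r₀ (12 / M), by positivity, ?_⟩
  intro r' hr' hrlt
  obtain ⟨r, rfl⟩ : ∃ r, r' = κ * r := ⟨r' / κ, by field_simp⟩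
  have hr : 0 < r := by
    by_contra hh
    nlinarith
  have hrmin : r < min r₀ (12 / M) := lt_of_mul_lt_mul_left hrlt hκ0.le
  have hrr₀ : r < r₀ := hrmin.trans_le (min_le_left _ _)
  have hrM : M < 12 / r := by
    have := hrmin.trans_le (min_le_right _ _)
    rw [lt_div_iff₀ hM] at this
    rw [lt_div_iff₀ hr]
    linarith
  obtain ⟨U, hU1, hU2, hU3⟩ := hD r hr hrr₀
  have hp := fun i => exists_bump {x | ∃ V ∈ U i, x ∈ V} (r / 3) (by positivity)
  choose p p0 p1 p2 p3 p4 using hp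
  obtain ⟨H, hH1, hH2, -, hH4⟩ := hP (12 / r) hrM
    (fun i x => 2 * (p i.castSucc x - p (Fin.last _) x)) (by
      intro i x y
      have e1 := p4 i.castSucc x y
      have e2 := p4 (Fin.last _) x y
      rw [show 1 / (r / 3) * dist x y = 3 * (1 / r * dist x y) by field_simp] at e1 e2
      rw [show 12 / r * dist x y = 12 * (1 / r * dist x y) by field_simp]
      rw [abs_le] at *
      constructor <;> linarith)
  let Q : Fin (m + 2) → X → ℝ :=
    fun i x => Fin.lastCases (motive := fun _ => ℝ) 0 (fun j => H j x) i
  have hQl : ∀ x, Q (Fin.last _) x = 0 := fun x => by simp [Q]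
  have hQc : ∀ i x, Q (Fin.castSucc i) x = H i x := fun i x => by simp [Q]
  have hQ1 : ∀ x, ∃ i j, c ≤ Q i x - Q j x := by
    intro x
    obtain ⟨i, hi⟩ := hH2 x
    rcases le_abs.1 hi with h | h
    · exact ⟨i.castSucc, Fin.last _, by rw [hQc, hQl]; linarith⟩
    · exact ⟨Fin.last _, i.castSucc, by rw [hQc, hQl]; linarith⟩
  have hQ2 : ∀ x i j, Q j x < Q i x → 0 < p i x := by
    intro x i j hij
    by_cases hall : ∀ k, 0 < p k x
    · exact hall i
    push Not at hall
    obtain ⟨k, hk⟩ := hall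
    have hk0 : p k x = 0 := le_antisymm hk (p0 k x)
    obtain ⟨l, V, hV, hxV⟩ := hU1 x
    have hl : p l x = 1 := p2 l x ⟨V, hV, hxV⟩
    have hbig : ∃ i : Fin (m + 1), 1 ≤ |2 * (p i.castSucc x - p (Fin.last _) x)| := by
      by_cases hhalf : 1 / 2 ≤ p (Fin.last _) x
      · induction k using Fin.lastCases with
        | last => linarith
        | cast k => exact ⟨k, le_abs.2 (Or.inr (by linarith))⟩
      · push Not at hhalf
        induction l using Fin.lastCases with
        | last => linarith
        | cast l => exact ⟨l, le_abs.2 (Or.inl (by linarith))⟩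
    have hHF := hH4 x hbig
    have hQp : ∀ i, Q i x = 2 * (p i x - p (Fin.last _) x) := by
      intro i
      induction i using Fin.lastCases with
      | last => rw [hQl]; ring
      | cast i => rw [hQc, hHF]
    rw [hQp, hQp] at hij
    have := p0 j x
    linarith
  have hQ3 : ∀ i x y, |Q i x - Q i y| * r ≤ K * dist x y := by
    intro i x y
    induction i using Fin.lastCases with
    | last => rw [hQl, hQl]; simp; positivity
    | cast i =>
      rw [hQc, hQc]
      have := hH1 i x y
      rw [show C₁ * (12 / r) * dist x y = K * dist x y / r by rw [hK]; field_simp,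
        le_div_iff₀ hr] at this
      exact this
  obtain ⟨pick, hpick⟩ : ∃ pick : Finset (Fin (m + 2)) → Fin (m + 2),
      ∀ S, S.Nonempty → pick S ∈ S := by
    classical
    exact ⟨fun S => if h : S.Nonempty then h.choose else 0,
      fun S h => by simp only [dif_pos h]; exact h.choose_spec⟩
  let W : Finset (Fin (m + 2)) → Set X → Set X := fun S V =>
    {x | (∀ i ∈ S, ∀ j ∉ S, δ ≤ Q i x - Q j x) ∧ ∃ s ∈ V, dist x s < r / 3}
  refine ⟨fun k => {Z | ∃ S : Finset (Fin (m + 2)), S.card = k + 1 ∧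
    ∃ V ∈ U (pick S), Z = W S V}, ?_, ?_, ?_⟩
  · intro x
    obtain ⟨a, b, hab⟩ := hQ1 x
    obtain ⟨S, haS, hbS, hS⟩ := gap_lemma m (fun i => Q i x) c hc a b hab
    rw [← hδ] at hS
    have hS0 : 0 < S.card := Finset.card_pos.2 ⟨a, haS⟩
    have hS1 : S.card < m + 2 := by
      have : S.card < (Finset.univ : Finset (Fin (m + 2))).card :=
        Finset.card_lt_card (Finset.ssubset_univ_iff.2 (by rintro rfl; simp at hbS))
      simpa using this
    have hpS := hpick S ⟨a, haS⟩
    have hpos : 0 < p (pick S) x := hQ2 x _ b (by have := hS _ hpS b hbS; linarith)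
    obtain ⟨s, ⟨V, hV, hsV⟩, hs⟩ := p3 _ x hpos
    exact ⟨⟨S.card - 1, by omega⟩, W S V, ⟨S, by simp only []; omega, V, hV, rfl⟩, hS, s, hsV, hs⟩
  · rintro k _ ⟨S, hSc, V, hV, rfl⟩ _ ⟨T, hTc, V', hV', rfl⟩ hne x ⟨hx1, s, hsV, hs⟩ y
      ⟨hy1, t, htV, ht⟩
    by_cases hST : S = T
    · subst hST
      have hVV : V ≠ V' := by
        rintro rfl
        exact hne rfl
      have h1 := hU2 _ V hV V' hV' hVV s hsV t htV
      have h2 := dist_triangle4 s x y t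
      rw [dist_comm s x] at h2
      nlinarith
    · obtain ⟨i, hiS, hiT⟩ : ∃ i ∈ S, i ∉ T := by
        by_contra hcon
        push Not at hcon
        exact hST (Finset.eq_of_subset_of_card_le hcon (by omega))
      obtain ⟨j, hjT, hjS⟩ : ∃ j ∈ T, j ∉ S := by
        by_contra hcon
        push Not at hcon
        exact hST (Finset.eq_of_subset_of_card_le hcon (by omega)).symm
      have h1 := hx1 i hiS j hjS
      have h2 := hy1 j hjT i hiT
      have h3 := hQ3 i x y
      have h4 := hQ3 j x y
      have h5 := le_abs_self (Q i x - Q i y)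
      have h6 := neg_abs_le (Q j x - Q j y)
      have h7 : 2 * δ ≤ |Q i x - Q i y| + |Q j x - Q j y| := by linarith
      have h8 : 2 * δ * r ≤ 2 * (K * dist x y) := by
        have := mul_le_mul_of_nonneg_right h7 hr.le
        linarith
      have h9 : κ * (2 * K) * r ≤ δ * r := by gcongr
      have h10 : K * (2 * (κ * r)) ≤ K * dist x y := by linarith
      have h11 := le_of_mul_le_mul_left h10 hK0
      linarith
  · rintro k _ ⟨S, hSc, V, hV, rfl⟩ x ⟨-, s, hsV, hs⟩ y ⟨-, t, htV, ht⟩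
    have h1 := hU3 _ V hV s hsV t htV
    have h2 := dist_triangle4 x s t y
    rw [dist_comm t y] at h2
    rw [show (C₀ + 1) / κ * (κ * r) = C₀ * r + r by field_simp]
    linarith

theorem capacityDim_mono {X : Type*} [MetricSpace X] {m n : ℕ} (hmn : m ≤ n)
    (h : CapacityDimLE X m) : CapacityDimLE X n := by
  obtain ⟨C, hC, r₀, hr₀, h⟩ := h
  refine ⟨C, hC, r₀, hr₀, fun r hr hr2 => ?_⟩
  obtain ⟨U, h1, h2, h3⟩ := h r hr hr2
  refine ⟨fun i => {V | ∃ hi : (i : ℕ) < m + 1, V ∈ U ⟨i, hi⟩}, ?_, ?_, ?_⟩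
  · intro x
    obtain ⟨i, V, hV, hx⟩ := h1 x
    exact ⟨⟨i, by omega⟩, V, ⟨i.2, hV⟩, hx⟩
  · rintro i V ⟨hi, hV⟩ W ⟨_, hW⟩
    exact h2 _ V hV W hW
  · rintro i V ⟨hi, hV⟩
    exact h3 _ V hV

theorem normalize_lip {E : Type*} [NormedAddCommGroup E] [NormedSpace ℝ E] {u v : E} {c : ℝ}
    (hc : 0 < c) (hu : c ≤ ‖u‖) (hv : c ≤ ‖v‖) :
    ‖(‖u‖⁻¹ • u) - (‖v‖⁻¹ • v)‖ ≤ 2 / c * ‖u - v‖ := by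
  have hu0 : 0 < ‖u‖ := hc.trans_le hu
  have hv0 : 0 < ‖v‖ := hc.trans_le hv
  have e : (‖u‖⁻¹ • u) - (‖v‖⁻¹ • v) = ‖u‖⁻¹ • ((u - v) + ((‖v‖ - ‖u‖) * ‖v‖⁻¹) • v) := by
    rw [smul_add, smul_sub, smul_smul, sub_add, ← sub_smul]
    congr 2
    field_simp
    ring
  rw [e, norm_smul, norm_inv, norm_norm]
  have h1 : ‖((‖v‖ - ‖u‖) * ‖v‖⁻¹) • v‖ ≤ ‖u - v‖ := by
    rw [norm_smul, norm_mul, norm_inv, norm_norm, mul_assoc, inv_mul_cancel₀ hv0.ne', mul_one,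
      norm_sub_rev u v]
    exact abs_norm_sub_norm_le v u
  have h2 := norm_add_le (u - v) (((‖v‖ - ‖u‖) * ‖v‖⁻¹) • v)
  have h3 : ‖u‖⁻¹ ≤ c⁻¹ := inv_anti₀ hc hu
  calc ‖u‖⁻¹ * ‖(u - v) + ((‖v‖ - ‖u‖) * ‖v‖⁻¹) • v‖ ≤ c⁻¹ * (‖u - v‖ + ‖u - v‖) := by
        gcongr
        linarith
    _ = _ := by ring

theorem eucl_norm_le {n : ℕ} (v : EuclideanSpace ℝ (Fin (n + 1))) (B : ℝ) (hB : 0 ≤ B)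
    (h : ∀ i, |v i| ≤ B) : ‖v‖ ≤ √(n + 1 : ℝ) * B := by
  rw [EuclideanSpace.norm_eq]
  calc √(∑ i, ‖v i‖ ^ 2) ≤ √(∑ _i : Fin (n + 1), B ^ 2) := by
        apply Real.sqrt_le_sqrt
        apply Finset.sum_le_sum
        intro i _
        have := h i
        rw [Real.norm_eq_abs]
        gcongr
    _ = √((n + 1 : ℝ) * B ^ 2) := by simp
    _ = _ := by rw [Real.sqrt_mul (by positivity), Real.sqrt_sq hB]

theorem eucl_abs_le {n : ℕ} (v : EuclideanSpace ℝ (Fin (n + 1))) (i) : |v i| ≤ ‖v‖ :=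
  PiLp.norm_apply_le v i

/-- McShane extension of a real function. -/
theorem mcshane {X : Type*} [MetricSpace X] (A : Set X) (f : A → ℝ) (L : ℝ) (hL : 0 < L)
    (hf : ∀ a b : A, |f a - f b| ≤ L * dist (a : X) (b : X)) :
    ∃ g : X → ℝ, (∀ a : A, g a = f a) ∧ ∀ x y, |g x - g y| ≤ L * dist x y := by
  classical
  let f' : X → ℝ := fun x => if h : x ∈ A then f ⟨x, h⟩ else 0
  have hf' : LipschitzOnWith ⟨L, hL.le⟩ f' A := by
    apply LipschitzOnWith.of_dist_le_mul
    intro x hx y hy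
    simp only [f', dif_pos hx, dif_pos hy, Real.dist_eq]
    exact hf ⟨x, hx⟩ ⟨y, hy⟩
  obtain ⟨g, hg, hgf⟩ := hf'.extend_real
  refine ⟨g, fun a => ?_, fun x y => ?_⟩
  · rw [← hgf a.2]
    simp [f']
  · exact hg.dist_le_mul x y

theorem extensor_of_avoidZero {X : Type*} [MetricSpace X] (n : ℕ) (h : AvoidZero X n) :
    SmallScaleLipschitzExtensorOf X (Metric.sphere (0 : EuclideanSpace ℝ (Fin (n + 1))) 1) := by
  obtain ⟨C, hC, c, hc, M, hM, h⟩ := h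
  obtain ⟨s, hs⟩ : ∃ s, s = √(n + 1 : ℝ) := ⟨_, rfl⟩
  have hs0 : 0 < s := by rw [hs]; positivity
  refine ⟨2 / c * (s * (C * s)), by positivity, M / s, by positivity, ?_⟩
  intro A _ lam hlam f hf
  have hlam0 : 0 < lam := lt_trans (by positivity) hlam
  have hext : ∀ i : Fin (n + 1), ∃ g : X → ℝ,
      (∀ a : A, g a = s * (f a : EuclideanSpace ℝ (Fin (n + 1))) i) ∧
      ∀ x y, |g x - g y| ≤ s * lam * dist x y := by
    intro i
    apply mcshane A _ _ (by positivity)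
    intro a b
    rw [← mul_sub, abs_mul, abs_of_pos hs0, mul_assoc]
    gcongr
    refine le_trans ?_ (hf a b)
    rw [Subtype.dist_eq, dist_eq_norm]
    exact eucl_abs_le ((f a : EuclideanSpace ℝ (Fin (n + 1))) - (f b : EuclideanSpace ℝ (Fin (n + 1)))) i
  choose F hF1 hF2 using hext
  obtain ⟨H, hH1, hH2, -, hH4⟩ := h (s * lam)
    (by rw [div_lt_iff₀ hs0] at hlam; linarith) F hF2
  let G : X → EuclideanSpace ℝ (Fin (n + 1)) := fun x => WithLp.toLp 2 (fun i => H i x)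
  have hGc : ∀ x, c ≤ ‖G x‖ := by
    intro x
    obtain ⟨i, hi⟩ := hH2 x
    exact hi.trans (eucl_abs_le (G x) i)
  have hGl : ∀ x y, ‖G x - G y‖ ≤ s * (C * (s * lam) * dist x y) := by
    intro x y
    rw [hs]
    apply eucl_norm_le _ _ (by positivity)
    intro i
    rw [← hs]
    exact hH1 i x y
  refine ⟨fun x => ⟨‖G x‖⁻¹ • G x, ?_⟩, ?_, ?_⟩
  · rw [mem_sphere_zero_iff_norm, norm_smul, norm_inv, norm_norm, inv_mul_cancel₀]
    exact (hc.trans_le (hGc x)).ne'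
  · intro a
    have hfa : ‖(f a : EuclideanSpace ℝ (Fin (n + 1)))‖ = 1 := mem_sphere_zero_iff_norm.1 (f a).2
    have hbig : ∃ i, 1 ≤ |F i a| := by
      by_contra hcon
      push Not at hcon
      obtain ⟨i₀, -, hmax⟩ := Finset.exists_max_image Finset.univ (fun i => |F i a|)
        Finset.univ_nonempty
      have h1 := eucl_norm_le (f a : EuclideanSpace ℝ (Fin (n + 1))) (|F i₀ a| / s)
        (by positivity) (by
          intro i
          rw [le_div_iff₀ hs0]
          have := hmax i (Finset.mem_univ _)
          rw [hF1 i a, abs_mul, abs_of_pos hs0] at this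
          linarith)
      rw [hfa, ← hs, mul_div_cancel₀ _ hs0.ne'] at h1
      exact absurd (hcon i₀) (not_lt.2 h1)
    have hGa : G a = s • (f a : EuclideanSpace ℝ (Fin (n + 1))) := by
      ext i
      simp only [G, PiLp.smul_apply, smul_eq_mul]
      rw [hH4 a hbig i, hF1]
    apply Subtype.ext
    simp only [hGa, norm_smul, hfa, mul_one, smul_smul, Real.norm_eq_abs, abs_of_pos hs0]
    rw [inv_mul_cancel₀ hs0.ne', one_smul]
  · intro x y
    rw [Subtype.dist_eq, dist_eq_norm]
    refine (normalize_lip hc (hGc x) (hGc y)).trans ?_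
    calc 2 / c * ‖G x - G y‖ ≤ 2 / c * (s * (C * (s * lam) * dist x y)) := by
          have := hGl x y
          gcongr
      _ = _ := by ring

/-- Truncation to `[-1, 1]`. -/
def clip (t : ℝ) : ℝ := max (-1) (min t 1)

theorem clip_lip (s t : ℝ) : |clip s - clip t| ≤ |s - t| := by
  unfold clip; grind
theorem clip_abs (t : ℝ) : |clip t| ≤ 1 := by
  unfold clip; grind
theorem clip_big {t : ℝ} (h : 1 ≤ |t|) : |clip t| = 1 := by
  unfold clip; grind
theorem clip_small {t : ℝ} (h : |t| < 1) : clip t = t := by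
  unfold clip; grind

theorem avoidZero_of_extensor {X : Type*} [MetricSpace X] (n : ℕ)
    (h : SmallScaleLipschitzExtensorOf X
      (Metric.sphere (0 : EuclideanSpace ℝ (Fin (n + 1))) 1)) :
    AvoidZero X n := by
  obtain ⟨C, hC, M, hM, h⟩ := h
  obtain ⟨s, hs⟩ : ∃ s, s = √(n + 1 : ℝ) := ⟨_, rfl⟩
  have hs1 : 1 ≤ s := by rw [hs, Real.one_le_sqrt]; linarith [(Nat.cast_nonneg n : (0 : ℝ) ≤ n)]
  have hs0 : 0 < s := by linarith
  refine ⟨s * (C * (2 * s)) + 2 * s + 2, by positivity, 1 / s, by positivity, M, hM, ?_⟩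
  intro L hL F hF
  have hL0 : 0 < L := hM.trans hL
  let G : X → EuclideanSpace ℝ (Fin (n + 1)) := fun x => WithLp.toLp 2 (fun i => clip (F i x))
  have hGi : ∀ i x, G x i = clip (F i x) := fun i x => rfl
  have hGl : ∀ x y, ‖G x - G y‖ ≤ s * (L * dist x y) := by
    intro x y
    rw [hs]
    apply eucl_norm_le _ _ (by positivity)
    intro i
    exact (clip_lip _ _).trans (hF i x y)
  have hGb : ∀ x, ‖G x‖ ≤ s := by
    intro x
    have := eucl_norm_le (G x) 1 (by norm_num) (fun i => clip_abs _)
    rw [hs]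
    linarith
  let A : Set X := {x | ∃ i, 1 ≤ |F i x|}
  have hGA : ∀ x ∈ A, 1 ≤ ‖G x‖ := by
    rintro x ⟨i, hi⟩
    have := eucl_abs_le (G x) i
    rw [hGi, clip_big hi] at this
    exact this
  obtain ⟨g, hg1, hg2⟩ : ∃ g : X → Metric.sphere (0 : EuclideanSpace ℝ (Fin (n + 1))) 1,
      (∀ x ∈ A, (g x : EuclideanSpace ℝ (Fin (n + 1))) = ‖G x‖⁻¹ • G x) ∧
      ∀ x y, dist (g x) (g y) ≤ C * (2 * s * L) * dist x y := by
    by_cases hA : A.Nonempty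
    · obtain ⟨g, hg1, hg2⟩ := h A hA (2 * s * L) (by nlinarith)
        (fun a => ⟨‖G a‖⁻¹ • G a, by
          rw [mem_sphere_zero_iff_norm, norm_smul, norm_inv, norm_norm, inv_mul_cancel₀]
          exact (lt_of_lt_of_le one_pos (hGA a a.2)).ne'⟩) (by
          intro a b
          rw [Subtype.dist_eq, dist_eq_norm]
          refine (normalize_lip one_pos (hGA a a.2) (hGA b b.2)).trans ?_
          have := hGl a b
          linarith)
      exact ⟨g, fun x hx => by rw [hg1 ⟨x, hx⟩], hg2⟩
    · refine ⟨fun _ => ⟨EuclideanSpace.single 0 1, by simp⟩, fun x hx => (hA ⟨x, hx⟩).elim, ?_⟩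
      intro x y
      rw [dist_self]
      positivity
  let ρ : X → ℝ := fun x => max 1 ‖G x‖
  have hρ1 : ∀ x, 1 ≤ ρ x := fun x => le_max_left _ _
  have hρ2 : ∀ x, |ρ x| ≤ s := fun x => by
    rw [abs_of_pos (lt_of_lt_of_le one_pos (hρ1 x))]
    exact max_le hs1 (hGb x)
  have hρ3 : ∀ x y, |ρ x - ρ y| ≤ (s * L) * dist x y := by
    intro x y
    refine (max_left_lip _ _ _).trans ((abs_norm_sub_norm_le _ _).trans ?_)
    have := hGl x y
    linarith
  have hgn : ∀ x, ‖(g x : EuclideanSpace ℝ (Fin (n + 1)))‖ = 1 :=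
    fun x => mem_sphere_zero_iff_norm.1 (g x).2
  let gi : Fin (n + 1) → X → ℝ := fun i x => (g x : EuclideanSpace ℝ (Fin (n + 1))) i
  have hgi1 : ∀ i x, |gi i x| ≤ 1 := fun i x => (hgn x) ▸ eucl_abs_le _ i
  have hgi2 : ∀ i x y, |gi i x - gi i y| ≤ (C * (2 * s * L)) * dist x y := by
    intro i x y
    refine le_trans ?_ (hg2 x y)
    rw [Subtype.dist_eq, dist_eq_norm]
    exact eucl_abs_le ((g x : EuclideanSpace ℝ (Fin (n + 1))) - (g y : EuclideanSpace ℝ (Fin (n + 1)))) i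
  have hagree : ∀ x ∈ A, ∀ i, ρ x * gi i x = clip (F i x) := by
    intro x hx i
    have h1 := hGA x hx
    have h2 : ρ x = ‖G x‖ := max_eq_right h1
    simp only [gi, hg1 x hx, h2, PiLp.smul_apply, smul_eq_mul, hGi]
    field_simp
  refine ⟨fun i x => F i x + (ρ x * gi i x - clip (F i x)), ?_, ?_, ?_, ?_⟩
  · intro i x y
    have e1 := mul_lip (hρ2 x) (hgi1 i y) (hρ3 x y) (hgi2 i x y)
    have e2 := hF i x y
    have e3 := (clip_lip _ _).trans e2
    have hd : 0 ≤ s * (L * dist x y) := by positivity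
    rw [abs_le] at *
    constructor <;> nlinarith
  · intro x
    by_cases hx : x ∈ A
    · obtain ⟨i, hi⟩ := hx
      refine ⟨i, ?_⟩
      simp only [hagree x ⟨i, hi⟩ i, sub_self, add_zero]
      refine le_trans ?_ hi
      rw [div_le_one hs0]
      exact hs1
    · have hsm : ∀ i, |F i x| < 1 := by
        intro i
        by_contra hcon
        exact hx ⟨i, not_lt.1 hcon⟩
      by_contra hcon
      push Not at hcon
      obtain ⟨i₀, -, hmax⟩ := Finset.exists_max_image Finset.univ (fun i => |gi i x|)
        Finset.univ_nonempty
      have h1 := eucl_norm_le (g x : EuclideanSpace ℝ (Fin (n + 1))) (|gi i₀ x|) (abs_nonneg _)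
        (fun i => hmax i (Finset.mem_univ _))
      rw [hgn, ← hs] at h1
      have h2 := hcon i₀
      rw [clip_small (hsm i₀), add_sub_cancel, abs_mul, lt_div_iff₀ hs0,
        abs_of_pos (lt_of_lt_of_le one_pos (hρ1 x))] at h2
      have h3 := hρ1 x
      have h4 := abs_nonneg (gi i₀ x)
      nlinarith
  · intro i x
    rw [add_sub_cancel_left]
    have e1 : |ρ x * gi i x| ≤ s := by
      rw [abs_mul]
      have := hρ2 x
      have := hgi1 i x
      have := abs_nonneg (ρ x)
      have := abs_nonneg (gi i x)
      nlinarith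
    have e2 := clip_abs (F i x)
    have e3 : 0 ≤ s * (C * (2 * s)) := by positivity
    rw [abs_le] at *
    constructor <;> linarith
  · intro x hx i
    simp only [hagree x hx i, sub_self, add_zero]

theorem sphere_small_scale_extensor_iff_capacity_dim
    {X : Type*} [MetricSpace X] (N : ℕ) (hN : CapacityDimLE X N) (n : ℕ) :
    SmallScaleLipschitzExtensorOf X (Metric.sphere (0 : EuclideanSpace ℝ (Fin (n + 1))) 1) ↔
      CapacityDimLE X n := by
  constructor
  · intro h
    have h0 := avoidZero_of_extensor n h
    have hall : ∀ m, n ≤ m → AvoidZero X m := by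
      intro m hm
      induction m, hm using Nat.le_induction with
      | base => exact h0
      | succ m _ ih => exact avoidZero_succ m ih
    rcases le_total N n with hNn | hNn
    · exact capacityDim_mono hNn hN
    · induction N, hNn using Nat.le_induction with
      | base => exact hN
      | succ m hm ih => exact ih (capacityDim_step m (hall m hm) hN)
  · intro h
    exact extensor_of_avoidZero n (avoidZero_of_capacityDim n h)
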